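/- For all s with 0 < Re(s) < 1 (in fact for all s by analytic continuation), the Mellin transform ∫₀^∞ x^{s−1} Θ(x) dx equals the completed Riemann xi function ξ(s) = (1/2)s(s−1)π^{−s/2}Γ(s/2)ζ(s). -/

import Mathlib

open Real MeasureTheory

noncomputable def Theta (x : ℝ) : ℝ :=
  2 * x ^ 2 * ∑' n : ℕ,
    (2 * π ^ 2 * ((n : ℝ) + 1) ^ 4 * x ^ 2 - 3 * π * ((n : ℝ) + 1) ^ 2) *
      Real.exp (-π * ((n : ℝ) + 1) ^ 2 * x ^ 2)

noncomputable def xi (s : ℂ) : ℂ :=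
  (1 / 2) * s * (s - 1) * (π : ℂ) ^ (-s / 2) * Complex.Gamma (s / 2) * riemannZeta s

/-!
With `ψ y = (4π²y⁴ - 6πy²) e^{-πy²}` we have `Θ x = ∑_{n ≥ 1} ψ (n x)`, so integrating termwise for
`Re s > 1` gives `∫ x^{s-1} Θ = ζ(s) ∫ x^{s-1} ψ`, and the last integral is a Gamma factor. To reach
every `s`, note that `2 Θ = (x² ϑ')'`, where `ϑ x = ∑_{n ∈ ℤ} e^{-πn²x²}` satisfies
`ϑ (1/x) = x ϑ x`; the operator `f ↦ (x² f')'` preserves this symmetry, so `Θ (1/x) = x Θ x`. Hence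
`Θ`, which decays rapidly at infinity, does so at zero as well, its Mellin transform is entire, and
the identity extends by analytic continuation.
-/

open Filter Topology Asymptotics Set HurwitzKernelBounds

section SumsOverDilates

variable {E : Type*} [NormedAddCommGroup E]

lemma isBigO_atTop_tsum_comp_natCast_add_one_mul {f : ℝ → E} {r : ℝ} (hr : r < -1)
    (hf : f =O[atTop] (· ^ r)) :
    (fun x : ℝ ↦ ∑' n : ℕ, f ((n + 1) * x)) =O[atTop] (· ^ r) := by
  have hsum : Summable fun n : ℕ ↦ ((n : ℝ) + 1) ^ r := by
    exact_mod_cast (summable_nat_add_iff 1).mpr (Real.summable_nat_rpow.mpr hr)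
  obtain ⟨C, hC⟩ := hf.bound
  obtain ⟨A, hA⟩ := eventually_atTop.mp hC
  refine .of_bound (C * ∑' n : ℕ, ((n : ℝ) + 1) ^ r) ?_
  filter_upwards [eventually_ge_atTop A, eventually_gt_atTop 0] with x hxA hx
  rw [mul_right_comm]
  refine tsum_of_norm_bounded (hsum.hasSum.mul_left _) fun n ↦ ?_
  have hxn : x ≤ (n + 1) * x := le_mul_of_one_le_left hx.le (by simp)
  calc ‖f ((n + 1) * x)‖ ≤ C * ‖((n + 1) * x) ^ r‖ := hA _ (hxA.trans hxn)
    _ = C * ‖x ^ r‖ * (n + 1) ^ r := by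
        rw [mul_rpow (by positivity) hx.le, norm_mul, Real.norm_of_nonneg (by positivity)]
        ring

variable [NormedSpace ℂ E]

lemma integral_norm_cpow_smul_comp_mul_left (f : ℝ → E) (s : ℂ) {a : ℝ} (ha : 0 < a) :
    ∫ x in Ioi (0 : ℝ), ‖(x : ℂ) ^ (s - 1) • f (a * x)‖ =
      a ^ (-s.re) * ∫ x in Ioi (0 : ℝ), ‖(x : ℂ) ^ (s - 1) • f x‖ := by
  have hdilate : ∀ x ∈ Ioi (0 : ℝ), ‖(x : ℂ) ^ (s - 1) • f (a * x)‖ =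
      a ^ (1 - s.re) * ‖((a * x : ℝ) : ℂ) ^ (s - 1) • f (a * x)‖ := fun x hx ↦ by
    have hx : 0 < x := hx
    rw [norm_smul, norm_smul, Complex.norm_cpow_eq_rpow_re_of_pos hx,
      Complex.norm_cpow_eq_rpow_re_of_pos (mul_pos ha hx), mul_rpow ha.le hx.le, ← mul_assoc,
      ← mul_assoc, ← rpow_add ha]
    simp
  rw [setIntegral_congr_fun measurableSet_Ioi hdilate, integral_const_mul,
    integral_comp_mul_left_Ioi (fun x : ℝ ↦ ‖(x : ℂ) ^ (s - 1) • f x‖) 0 ha, mul_zero, smul_eq_mul,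
    ← mul_assoc, ← rpow_neg_one a, ← rpow_add ha]
  ring_nf

lemma mellin_tsum_comp_natCast_add_one_mul {f : ℝ → E} {s : ℂ} (hs : 1 < s.re)
    (hf : MellinConvergent f s) :
    mellin (fun x ↦ ∑' n : ℕ, f ((n + 1) * x)) s = riemannZeta s • mellin f s := by
  have hpos (n : ℕ) : (0 : ℝ) < n + 1 := by positivity
  have hsum : Summable fun n : ℕ ↦ ∫ x in Ioi (0 : ℝ), ‖(x : ℂ) ^ (s - 1) • f ((n + 1) * x)‖ := by
    simp_rw [fun n : ℕ ↦ integral_norm_cpow_smul_comp_mul_left f s (hpos n)]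
    refine Summable.mul_right _ ?_
    exact_mod_cast (summable_nat_add_iff 1).mpr (Real.summable_nat_rpow.mpr (neg_lt_neg hs))
  have hzeta : HasSum (fun n : ℕ ↦ ((n : ℂ) + 1) ^ (-s)) (riemannZeta s) := by
    rw [zeta_eq_tsum_one_div_nat_add_one_cpow hs]
    simp_rw [Complex.cpow_neg, ← one_div]
    exact_mod_cast
      ((summable_nat_add_iff 1).mpr (Complex.summable_one_div_nat_cpow.mpr hs)).hasSum
  have hterms := hasSum_integral_of_summable_integral_norm
    (fun n : ℕ ↦ (MellinConvergent.comp_mul_left (hpos n)).mpr hf) hsum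
  calc mellin (fun x ↦ ∑' n : ℕ, f ((n + 1) * x)) s
    _ = ∑' n : ℕ, mellin (fun x ↦ f ((n + 1) * x)) s := by
        simp_rw [mellin, hterms.tsum_eq, tsum_const_smul'']
    _ = ∑' n : ℕ, ((n : ℂ) + 1) ^ (-s) • mellin f s :=
        tsum_congr fun n ↦ by simpa using mellin_comp_mul_left f s (hpos n)
    _ = riemannZeta s • mellin f s := (hzeta.smul_const _).tsum_eq

end SumsOverDilates

/- With `G x = x ^ 2 • f' x`, differentiating `f x⁻¹ = x • f x` gives `G x⁻¹ = -(f x + x⁻¹ • G x)`.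
Differentiating again gives the claim, since `f'` cancels against the derivative of `x⁻¹`. -/
lemma map_inv_eq_smul_of_hasDerivAt_sq_smul_deriv {E : Type*} [NormedAddCommGroup E]
    [NormedSpace ℝ E] {f f' F : ℝ → E} (hf : ∀ x, 0 < x → HasDerivAt f (f' x) x)
    (hF : ∀ x, 0 < x → HasDerivAt (fun y ↦ y ^ 2 • f' y) (F x) x)
    (hinv : ∀ x, 0 < x → f x⁻¹ = x • f x) {x : ℝ} (hx : 0 < x) : F x⁻¹ = x • F x := by
  have hderiv_inv {y : ℝ} (hy : 0 < y) : -(y⁻¹ ^ 2 • f' y⁻¹) = f y + y⁻¹ • y ^ 2 • f' y := by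
    have hleft := (hf y⁻¹ (inv_pos.mpr hy)).scomp y (hasDerivAt_inv hy.ne')
    have hright := (hasDerivAt_id y).smul (hf y hy)
    have heq := hleft.unique
      (hright.congr_of_eventuallyEq ((lt_mem_nhds hy).mono fun u hu ↦ hinv u hu))
    rw [inv_pow, ← neg_smul, heq, smul_smul, pow_two, inv_mul_cancel_left₀ hy.ne', one_smul,
      add_comm]
    rfl
  have hleft := ((hF x⁻¹ (inv_pos.mpr hx)).scomp x (hasDerivAt_inv hx.ne')).neg
  have hright := (hf x hx).add ((hasDerivAt_inv hx.ne').smul (hF x hx))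
  have heq := hleft.unique
    (hright.congr_of_eventuallyEq ((lt_mem_nhds hx).mono fun u hu ↦ hderiv_inv hu))
  have hcancel : (x ^ 2)⁻¹ • F x⁻¹ = x⁻¹ • F x := by
    simp only [neg_smul, neg_neg, inv_smul_smul₀ (pow_pos hx 2).ne'] at heq
    rw [heq]
    abel
  rw [inv_smul_eq_iff₀ (pow_pos hx 2).ne', smul_smul] at hcancel
  rw [hcancel, pow_two, mul_assoc, mul_inv_cancel₀ hx.ne', mul_one]

section ThetaFunction

lemma hasDerivAt_F_nat (k : ℕ) (a : ℝ) {t : ℝ} (ht : 0 < t) :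
    HasDerivAt (F_nat k a) (-π * F_nat (k + 2) a t) t := by
  have hterm (n : ℕ) (u : ℝ) :
      HasDerivAt (f_nat k a · n) (-π * f_nat (k + 2) a u n) u := by
    have hexponent := (hasDerivAt_id u).const_mul (-π * (n + a) ^ 2)
    refine (hexponent.exp.const_mul ((n + a) ^ k)).congr_deriv ?_
    simp only [f_nat, id]
    ring
  have hbound (n : ℕ) (u : ℝ) (hu : u ∈ Ioi (t / 2)) :
      ‖-π * f_nat (k + 2) a u n‖ ≤ π * ‖f_nat (k + 2) a (t / 2) n‖ := by
    have hu : t / 2 ≤ u := hu.le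
    simp only [f_nat, norm_mul, norm_neg, Real.norm_of_nonneg pi_pos.le,
      Real.norm_of_nonneg (exp_pos _).le, neg_mul]
    gcongr
  rw [F_nat, ← tsum_mul_left]
  exact hasDerivAt_tsum_of_isPreconnected ((summable_f_nat (k + 2) a (half_pos ht)).norm.mul_left π)
    isOpen_Ioi isPreconnected_Ioi (fun n u _ ↦ hterm n u) hbound (half_lt_self ht)
    (summable_f_nat k a ht) (half_lt_self ht)

lemma hasDerivAt_F_nat_sq (k : ℕ) (a : ℝ) {x : ℝ} (hx : 0 < x) :
    HasDerivAt (fun y ↦ F_nat k a (y ^ 2)) (-2 * π * x * F_nat (k + 2) a (x ^ 2)) x := by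
  have h := HasDerivAt.comp (h₂ := F_nat k a) (h := (· ^ 2)) x
    (hasDerivAt_F_nat k a (pow_pos hx 2)) (hasDerivAt_pow 2 x)
  refine h.congr_deriv ?_
  push_cast
  ring

lemma evenKernel_zero_eq_one_add {t : ℝ} (ht : 0 < t) :
    HurwitzZeta.evenKernel 0 t = 1 + 2 * F_nat 0 1 t := by
  have hsum := (HurwitzZeta.hasSum_nat_cosKernel₀ 0 ht).tsum_eq
  simp only [mul_zero, zero_mul, Real.cos_zero, mul_one, tsum_mul_left] at hsum
  rw [HurwitzZeta.evenKernel_eq_cosKernel_of_zero, F_nat]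
  simp only [f_nat, pow_zero, one_mul, hsum]
  simp

lemma evenKernel_zero_inv_sq {x : ℝ} (hx : 0 < x) :
    HurwitzZeta.evenKernel 0 (x⁻¹ ^ 2) = x * HurwitzZeta.evenKernel 0 (x ^ 2) := by
  have h := HurwitzZeta.evenKernel_functional_equation 0 (x⁻¹ ^ 2)
  rw [← HurwitzZeta.evenKernel_eq_cosKernel_of_zero, ← sqrt_eq_rpow,
    sqrt_sq (inv_pos.mpr hx).le] at h
  simpa using h

lemma hasDerivAt_evenKernel_zero_sq {x : ℝ} (hx : 0 < x) :
    HasDerivAt (fun y ↦ HurwitzZeta.evenKernel 0 (y ^ 2)) (-4 * π * x * F_nat 2 1 (x ^ 2)) x := by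
  have h := ((hasDerivAt_F_nat_sq 0 1 hx).const_mul 2).const_add 1
  refine (h.congr_of_eventuallyEq ?_).congr_deriv (by ring)
  filter_upwards [lt_mem_nhds hx] with y hy using evenKernel_zero_eq_one_add (pow_pos hy 2)

end ThetaFunction

section Theta

/-- The function `ψ` whose dilates by the positive integers sum to `Θ`. -/
noncomputable def thetaSummand (y : ℝ) : ℝ :=
  (4 * π ^ 2 * y ^ 4 - 6 * π * y ^ 2) * rexp (-π * y ^ 2)

lemma Theta_eq_tsum_thetaSummand (x : ℝ) : Theta x = ∑' n : ℕ, thetaSummand ((n + 1) * x) := by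
  rw [Theta, ← tsum_mul_left]
  refine tsum_congr fun n ↦ ?_
  rw [thetaSummand, mul_pow _ x 2, ← mul_assoc (-π)]
  ring

lemma Theta_eq_F_nat {x : ℝ} (hx : 0 < x) :
    Theta x = 4 * π ^ 2 * x ^ 4 * F_nat 4 1 (x ^ 2) - 6 * π * x ^ 2 * F_nat 2 1 (x ^ 2) := by
  have hsummable (k : ℕ) (c : ℝ) := (summable_f_nat k 1 (pow_pos hx 2)).mul_left c
  rw [F_nat, F_nat, ← tsum_mul_left, ← tsum_mul_left, ← (hsummable _ _).tsum_sub (hsummable _ _),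
    Theta, ← tsum_mul_left]
  refine tsum_congr fun n ↦ ?_
  simp only [f_nat]
  ring

lemma hasDerivAt_sq_mul_deriv_evenKernel_zero_sq {x : ℝ} (hx : 0 < x) :
    HasDerivAt (fun y ↦ y ^ 2 * (-4 * π * y * F_nat 2 1 (y ^ 2))) (2 * Theta x) x := by
  have h := ((hasDerivAt_pow 3 x).const_mul (-4 * π)).mul (hasDerivAt_F_nat_sq 2 1 hx)
  refine (h.congr_of_eventuallyEq (.of_eq ?_)).congr_deriv ?_
  · ext y
    simp only [Pi.mul_apply]
    ring
  · rw [Theta_eq_F_nat hx]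
    push_cast
    ring

lemma Theta_inv {x : ℝ} (hx : 0 < x) : Theta x⁻¹ = x * Theta x := by
  have h := map_inv_eq_smul_of_hasDerivAt_sq_smul_deriv
    (fun _ ↦ hasDerivAt_evenKernel_zero_sq) (fun _ ↦ hasDerivAt_sq_mul_deriv_evenKernel_zero_sq)
    (fun _ ↦ evenKernel_zero_inv_sq) hx
  rw [smul_eq_mul] at h
  linarith

lemma continuousOn_Theta : ContinuousOn Theta (Ioi 0) := by
  have hcont (k : ℕ) : ContinuousOn (fun x ↦ F_nat k 1 (x ^ 2)) (Ioi 0) :=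
    fun x hx ↦ (hasDerivAt_F_nat_sq k 1 hx).continuousAt.continuousWithinAt
  exact ContinuousOn.congr (by fun_prop) fun x hx ↦ Theta_eq_F_nat hx

lemma isBigO_atTop_thetaSummand (r : ℝ) : thetaSummand =O[atTop] (· ^ r) := by
  have hmonomial (k : ℕ) : (fun y : ℝ ↦ y ^ k * rexp (-π * y ^ 2)) =O[atTop] (· ^ r) := by
    have h := (rpow_mul_exp_neg_mul_sq_isLittleO_exp_neg pi_pos k).trans
      (isLittleO_exp_neg_mul_rpow_atTop one_half_pos r)
    simpa only [rpow_natCast] using h.isBigO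
  refine (((hmonomial 4).const_mul_left (4 * π ^ 2)).sub
    ((hmonomial 2).const_mul_left (6 * π))).congr_left fun y ↦ ?_
  rw [thetaSummand]
  ring

lemma isBigO_atTop_Theta (r : ℝ) : Theta =O[atTop] (· ^ r) := by
  have h : Theta =O[atTop] (· ^ min r (-2)) := by
    rw [funext Theta_eq_tsum_thetaSummand]
    exact isBigO_atTop_tsum_comp_natCast_add_one_mul (by grind) (isBigO_atTop_thetaSummand _)
  refine h.trans (.of_bound 1 ?_)
  filter_upwards [eventually_ge_atTop 1] with x hx
  have hnonneg (t : ℝ) : 0 ≤ x ^ t := rpow_nonneg (zero_le_one.trans hx) t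
  rw [one_mul, Real.norm_of_nonneg (hnonneg _), Real.norm_of_nonneg (hnonneg _)]
  exact rpow_le_rpow_of_exponent_le hx (min_le_left _ _)

/-- The Mellin transform data of `Θ`: its functional equation of weight `1` with itself, and its
rapid decay. -/
noncomputable def thetaFEPair : WeakFEPair ℂ where
  f x := Theta x
  g x := Theta x
  k := 1
  ε := 1
  f₀ := 0
  g₀ := 0
  hf_int := (Complex.continuous_ofReal.comp_continuousOn
    continuousOn_Theta).locallyIntegrableOn measurableSet_Ioi
  hg_int := (Complex.continuous_ofReal.comp_continuousOn
    continuousOn_Theta).locallyIntegrableOn measurableSet_Ioi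
  hk := one_pos
  hε := one_ne_zero
  h_feq x hx := by simp [Theta_inv hx]
  hf_top r := by simpa using Complex.isBigO_ofReal_left.mpr (isBigO_atTop_Theta r)
  hg_top r := by simpa using Complex.isBigO_ofReal_left.mpr (isBigO_atTop_Theta r)

lemma isStrongFEPair_thetaFEPair : IsStrongFEPair thetaFEPair := ⟨rfl, rfl⟩

end Theta

section MellinTransform

open Complex (Gammaℝ)

lemma hasMellin_exp_neg_mul {r : ℝ} (hr : 0 < r) {s : ℂ} (hs : 0 < s.re) :
    HasMellin (fun t : ℝ ↦ (rexp (-r * t) : ℂ)) s (r ^ (-s) * Complex.Gamma s) := by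
  have hcont : Continuous fun t : ℝ ↦ (rexp (-r * t) : ℂ) := by fun_prop
  refine ⟨mellinConvergent_of_isBigO_rpow_exp (b := 0) hr
    (hcont.locallyIntegrable.locallyIntegrableOn _)
    (Complex.isBigO_ofReal_left.mpr (isBigO_refl _ _)) ?_ hs, ?_⟩
  · simp only [neg_zero, rpow_zero]
    exact (hcont.continuousAt.isBigO_one ℝ).mono nhdsWithin_le_nhds
  · have h := Complex.integral_cpow_mul_exp_neg_mul_Ioi hs (r := r) hr
    rw [one_div, Complex.inv_cpow_ofReal_nonneg hr.le, ← Complex.cpow_neg] at h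
    simpa [mellin] using h

lemma hasMellin_exp_neg_pi_mul_sq {s : ℂ} (hs : 0 < s.re) :
    HasMellin (fun x : ℝ ↦ (rexp (-π * x ^ 2) : ℂ)) s (Gammaℝ s / 2) := by
  have h := hasMellin_exp_neg_mul pi_pos (s := s / (2 : ℝ)) (by simpa using hs)
  simp_rw [← rpow_two]
  refine ⟨(MellinConvergent.comp_rpow (f := fun t : ℝ ↦ (rexp (-π * t) : ℂ)) two_ne_zero).mpr h.1,
    ?_⟩
  rw [mellin_comp_rpow (fun t : ℝ ↦ (rexp (-π * t) : ℂ)), h.2, Complex.Gammaℝ_def]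
  simp [div_eq_inv_mul]

lemma hasMellin_pow_mul_exp_neg_pi_mul_sq (k : ℕ) {s : ℂ} (hs : 0 < (s + k).re) :
    HasMellin (fun x : ℝ ↦ (x : ℂ) ^ k * (rexp (-π * x ^ 2) : ℂ)) s (Gammaℝ (s + k) / 2) := by
  have h := hasMellin_exp_neg_pi_mul_sq hs
  simp_rw [← Complex.cpow_natCast, ← smul_eq_mul]
  exact ⟨MellinConvergent.cpow_smul.mpr h.1, (mellin_cpow_smul _ _ _).trans h.2⟩

lemma Gammaℝ_add_four {s : ℂ} (hs : s ≠ 0) (hs2 : s + 2 ≠ 0) :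
    Gammaℝ (s + 4) = Gammaℝ s * s * (s + 2) / (4 * π ^ 2) := by
  rw [show s + 4 = s + 2 + 2 by ring, Complex.Gammaℝ_add_two hs2, Complex.Gammaℝ_add_two hs]
  field

lemma hasMellin_thetaSummand {s : ℂ} (hs : 0 < s.re) :
    HasMellin (fun y ↦ (thetaSummand y : ℂ)) s (s * (s - 1) / 2 * Gammaℝ s) := by
  have h4 := hasMellin_pow_mul_exp_neg_pi_mul_sq 4 (s := s) (by simpa using by linarith)
  have h2 := hasMellin_pow_mul_exp_neg_pi_mul_sq 2 (s := s) (by simpa using by linarith)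
  have hdiff := hasMellin_sub (h4.1.const_smul (4 * π ^ 2 : ℂ)) (h2.1.const_smul (6 * π : ℂ))
  rw [mellin_const_smul, mellin_const_smul, h4.2, h2.2] at hdiff
  convert hdiff using 1
  · ext y
    simp only [thetaSummand, smul_eq_mul]
    push_cast
    ring
  · have hs0 : s ≠ 0 := Complex.ne_zero_of_re_pos hs
    have hs2 : s + 2 ≠ 0 := Complex.ne_zero_of_re_pos (by simpa using by linarith)
    have hπ : (π : ℂ) ≠ 0 := Complex.ofReal_ne_zero.mpr pi_ne_zero
    push_cast
    rw [Gammaℝ_add_four hs0 hs2, Complex.Gammaℝ_add_two hs0, smul_eq_mul, smul_eq_mul]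
    field

/-- The entire continuation of `ξ`. The formula defining `xi` has the junk value `0` at the poles
`s = 1` of `ζ` and `s = 0, -2, -4, …` of `Γ(s/2)`. -/
noncomputable def xiEntire (s : ℂ) : ℂ := (s * (s - 1) * completedRiemannZeta₀ s + 1) / 2

lemma differentiable_xiEntire : Differentiable ℂ xiEntire := by
  have := differentiable_completedZeta₀
  unfold xiEntire
  fun_prop

lemma xi_eq_mul_Gammaℝ_mul_riemannZeta (s : ℂ) :
    xi s = s * (s - 1) / 2 * Gammaℝ s * riemannZeta s := by
  rw [xi, Complex.Gammaℝ_def]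
  ring

lemma xi_eq_xiEntire {s : ℂ} (hs : s ≠ 1) (hΓ : Gammaℝ s ≠ 0) : xi s = xiEntire s := by
  have hs0 : s ≠ 0 := fun h ↦ hΓ (Complex.Gammaℝ_eq_zero_iff.mpr ⟨0, by simpa using h⟩)
  have hs1 : 1 - s ≠ 0 := sub_ne_zero.mpr hs.symm
  rw [xi_eq_mul_Gammaℝ_mul_riemannZeta, riemannZeta_def_of_ne_zero hs0, mul_assoc,
    mul_div_cancel₀ _ hΓ, completedRiemannZeta_eq, xiEntire]
  field_simp
  ring

lemma mellin_Theta_of_one_lt_re {s : ℂ} (hs : 1 < s.re) :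
    mellin (fun x ↦ (Theta x : ℂ)) s = xi s := by
  have hsummand := hasMellin_thetaSummand (zero_lt_one.trans hs)
  simp_rw [Theta_eq_tsum_thetaSummand, Complex.ofReal_tsum]
  rw [mellin_tsum_comp_natCast_add_one_mul hs hsummand.1, hsummand.2,
    xi_eq_mul_Gammaℝ_mul_riemannZeta, smul_eq_mul, mul_comm]

lemma mellin_Theta : mellin (fun x ↦ (Theta x : ℂ)) = xiEntire := by
  have hdiff : Differentiable ℂ (mellin fun x ↦ (Theta x : ℂ)) :=
    isStrongFEPair_thetaFEPair.Λ_eq ▸ isStrongFEPair_thetaFEPair.differentiable_Λ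
  refine AnalyticOnNhd.eq_of_eventuallyEq (z₀ := 2) (fun z _ ↦ hdiff.analyticAt z)
    (fun z _ ↦ differentiable_xiEntire.analyticAt z) ?_
  have hnhds : {z : ℂ | 1 < z.re} ∈ 𝓝 (2 : ℂ) :=
    (isOpen_lt continuous_const Complex.continuous_re).mem_nhds (by norm_num)
  filter_upwards [hnhds] with z hz
  have hz1 : z ≠ 1 := by rintro rfl; simp at hz
  rw [mellin_Theta_of_one_lt_re hz,
    xi_eq_xiEntire hz1 (Complex.Gammaℝ_ne_zero_of_re_pos (zero_lt_one.trans hz))]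

lemma hasMellin_Theta (s : ℂ) : HasMellin (fun x ↦ (Theta x : ℂ)) s (xiEntire s) :=
  ⟨(isStrongFEPair_thetaFEPair.hasMellin s).1, congrFun mellin_Theta s⟩

end MellinTransform

theorem stmt_3_general (s : ℂ) (hs : s ≠ 1) (hΓ : ∀ n : ℕ, s ≠ -(2 * n)) :
    HasMellin (fun x ↦ (Theta x : ℂ)) s (xi s) := by
  rw [xi_eq_xiEntire hs (mt Complex.Gammaℝ_eq_zero_iff.mp (by simpa using hΓ))]
  exact hasMellin_Theta s

theorem stmt_3 (s : ℂ) (h0 : 0 < s.re) (h1 : s.re < 1) :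
    (∫ x in Set.Ioi (0 : ℝ), (x : ℂ) ^ (s - 1) * (Theta x : ℂ)) = xi s :=
  (stmt_3_general s (by rintro rfl; simp at h1) fun n hn ↦
    Complex.Gammaℝ_ne_zero_of_re_pos h0 (Complex.Gammaℝ_eq_zero_iff.mpr ⟨n, hn⟩)).2
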